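/- arXiv:0804.2046 — 2 statements merged into one kernel-verified Lean document; each statement's English description precedes it below -/
import Mathlib

section
/- Let m* > 0, T0* > 0, g_s* > 0, a ∈ ℝ, z ∈ {−1, 1}, and α, β > 0. Set g_s = β⁴ g_s*, m = (α/β) m*, T0 = (α/β) T0*, μ0 = a·T0, μ0* = a·T0*. Then for every F > 0 (assuming, when z = −1, that m*·F > μ0*), the energy density satisfies ρ(F; g_s, m, T0, μ0) = α⁴ · ρ(F; g_s*, m*, T0*, μ0*). -/
/-!
With `k = α / β`, substitute `ε = k ε'` in the integral: the range `ε > k m*` becomes `ε' > m*`.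
The Boltzmann exponent is unchanged because `T0` and `μ0` scale like `ε`. The bracket is homogeneous
of degree three, so it contributes `k³`, the measure `dε` contributes `k`, and `g_s` contributes
`β⁴`; in all, `k⁴ β⁴ = α⁴`. The change of variables holds for the Bochner integral of an arbitrary
function, so integrability plays no role.
-/

open MeasureTheory Real Set

/-- One-particle phase-space density (Planck units, h³ = 8π³):
`𝒩(E) = (g_s/(8π³)) · (exp((E − μ0)/T0) + z)⁻¹`. -/
noncomputable def phaseN (gs T0 μ0 z E : ℝ) : ℝ :=
  gs / (8 * π ^ 3) * (Real.exp ((E - μ0) / T0) + z)⁻¹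

/-- Energy density `ρ = 4π ∫_m^∞ [(ε² − m²)^{3/2} + m²(ε² − m²)^{1/2}] 𝒩(εF) dε`. -/
noncomputable def rhoDef (gs m T0 μ0 z F : ℝ) : ℝ :=
  4 * π * ∫ ε in Ioi m,
    ((ε ^ 2 - m ^ 2) ^ ((3 : ℝ) / 2) + m ^ 2 * (ε ^ 2 - m ^ 2) ^ ((1 : ℝ) / 2))
      * phaseN gs T0 μ0 z (ε * F)

/-- Pressure `P = (4π/3) ∫_m^∞ (ε² − m²)^{3/2} 𝒩(εF) dε`. -/
noncomputable def Pdef (gs m T0 μ0 z F : ℝ) : ℝ :=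
  4 * π / 3 * ∫ ε in Ioi m, (ε ^ 2 - m ^ 2) ^ ((3 : ℝ) / 2) * phaseN gs T0 μ0 z (ε * F)

/-- Entropy density
`σ = (4πF/T0) ∫_m^∞ [(4/3)(ε² − m²)^{3/2} + (ε² − m²)^{1/2}(m² − ε μ0/F)] 𝒩(εF) dε`. -/
noncomputable def sigmaDef (gs m T0 μ0 z F : ℝ) : ℝ :=
  4 * π * F / T0 * ∫ ε in Ioi m,
    ((4 / 3) * (ε ^ 2 - m ^ 2) ^ ((3 : ℝ) / 2)
      + (ε ^ 2 - m ^ 2) ^ ((1 : ℝ) / 2) * (m ^ 2 - ε * μ0 / F))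
      * phaseN gs T0 μ0 z (ε * F)

/-- Particle density `n = 4π ∫_m^∞ (ε² − m²)^{1/2} ε 𝒩(εF) dε`. -/
noncomputable def nDef (gs m T0 μ0 z F : ℝ) : ℝ :=
  4 * π * ∫ ε in Ioi m, (ε ^ 2 - m ^ 2) ^ ((1 : ℝ) / 2) * ε * phaseN gs T0 μ0 z (ε * F)

/-- The phase-space density depends on energy, temperature and chemical potential only through their
ratios, and is linear in `g_s`. -/
lemma phaseN_scale {k T0 : ℝ} (hk : k ≠ 0) (c gs a z E : ℝ) :
    phaseN (c * gs) (k * T0) (a * (k * T0)) z (k * E) = c * phaseN gs T0 (a * T0) z E := by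
  have h : (k * E - a * (k * T0)) / (k * T0) = (E - a * T0) / T0 := by
    rw [← mul_div_mul_left (E - a * T0) T0 hk]
    congr 1
    ring
  unfold phaseN
  rw [h]
  ring

/-- The kinematic factor in the energy density is homogeneous of degree three in energy and mass. -/
lemma energy_factor_scale {k m ε : ℝ} (hk : 0 < k) (hm : 0 < m) (hε : m < ε) :
    ((k * ε) ^ 2 - (k * m) ^ 2) ^ ((3 : ℝ) / 2)
        + (k * m) ^ 2 * ((k * ε) ^ 2 - (k * m) ^ 2) ^ ((1 : ℝ) / 2)
      = k ^ 3 * ((ε ^ 2 - m ^ 2) ^ ((3 : ℝ) / 2)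
        + m ^ 2 * (ε ^ 2 - m ^ 2) ^ ((1 : ℝ) / 2)) := by
  have hx : 0 ≤ ε ^ 2 - m ^ 2 := by nlinarith
  have h3 : (k ^ 2) ^ ((3 : ℝ) / 2) = k ^ 3 := by
    rw [← Real.rpow_natCast_mul hk.le, ← Real.rpow_natCast k 3]
    norm_num
  have h1 : (k ^ 2) ^ ((1 : ℝ) / 2) = k := by
    rw [← Real.rpow_natCast_mul hk.le]
    norm_num
  have hd : (k * ε) ^ 2 - (k * m) ^ 2 = k ^ 2 * (ε ^ 2 - m ^ 2) := by ring
  rw [hd, Real.mul_rpow (sq_nonneg k) hx, Real.mul_rpow (sq_nonneg k) hx, h3, h1]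
  ring

/-- Scaling behaviour of the energy density: with `g_s = β⁴ g_s*`, `m = (α/β) m*`,
`T0 = (α/β) T0*`, `μ0 = a·T0`, `μ0* = a·T0*`, one has `ρ = α⁴ ρ*`. -/
theorem stmt1 (ms T0s gss a z α β : ℝ)
    (hms : 0 < ms) (hT0s : 0 < T0s) (hgss : 0 < gss)
    (hz : z = -1 ∨ z = 1) (hα : 0 < α) (hβ : 0 < β)
    (F : ℝ) (hF : 0 < F) (hpos : z = -1 → a * T0s < ms * F) :
    rhoDef (β ^ 4 * gss) (α / β * ms) (α / β * T0s) (a * (α / β * T0s)) z F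
      = α ^ 4 * rhoDef gss ms T0s (a * T0s) z F := by
  obtain ⟨k, hk⟩ : ∃ k, k = α / β := ⟨_, rfl⟩
  have hk0 : 0 < k := hk ▸ div_pos hα hβ
  have hα' : α = k * β := by rw [hk]; field_simp
  rw [← hk]
  unfold rhoDef
  have hsub := integral_comp_mul_left_Ioi (fun ε : ℝ =>
    ((ε ^ 2 - (k * ms) ^ 2) ^ ((3 : ℝ) / 2)
      + (k * ms) ^ 2 * (ε ^ 2 - (k * ms) ^ 2) ^ ((1 : ℝ) / 2))
      * phaseN (β ^ 4 * gss) (k * T0s) (a * (k * T0s)) z (ε * F)) ms hk0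
  rw [smul_eq_mul, eq_inv_mul_iff_mul_eq₀ hk0.ne'] at hsub
  rw [← hsub]
  have hint : ∀ ε ∈ Ioi ms,
      (((k * ε) ^ 2 - (k * ms) ^ 2) ^ ((3 : ℝ) / 2)
        + (k * ms) ^ 2 * ((k * ε) ^ 2 - (k * ms) ^ 2) ^ ((1 : ℝ) / 2))
        * phaseN (β ^ 4 * gss) (k * T0s) (a * (k * T0s)) z (k * ε * F)
      = k ^ 3 * β ^ 4 * (((ε ^ 2 - ms ^ 2) ^ ((3 : ℝ) / 2)
        + ms ^ 2 * (ε ^ 2 - ms ^ 2) ^ ((1 : ℝ) / 2))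
        * phaseN gss T0s (a * T0s) z (ε * F)) := by
    intro ε hε
    rw [energy_factor_scale hk0 hms hε, mul_assoc k ε F, phaseN_scale hk0.ne']
    ring
  rw [setIntegral_congr_fun measurableSet_Ioi hint, integral_const_mul, hα']
  ring
end

section
/- Fix m ≥ 0, g_s > 0, T0 > 0, F > 0, z ∈ {−1, 1}. Then on the open set of μ0 ∈ ℝ satisfying the positivity condition (z = 1, or z = −1 and mF > μ0), the function μ0 ↦ P (pressure as a function of the chemical-potential parameter, with all other parameters fixed) is differentiable and satisfies ∂P/∂μ0 = n/F, where n is the particle density evaluated at the same parameters. -/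
/-!
Write `w(ε) = (ε² − m²)^{3/2}`. The density `𝒩` depends on `E` and `μ0` only through `E − μ0`, so
`∂𝒩/∂μ0 = −∂𝒩/∂E`. Differentiating under the integral sign (dominated convergence) gives
`∂/∂μ0 ∫ w 𝒩(εF) dε = −(1/F) ∫ w ∂_ε[𝒩(εF)] dε`, and an integration by parts, whose boundary
terms vanish at `ε = m` because `w(m) = 0` and at infinity by exponential decay, turns this into
`(1/F) ∫ 3ε (ε² − m²)^{1/2} 𝒩(εF) dε`.

The domination rests on `exists_lower_bound`: the positivity condition is open in `μ0`, and for all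
`u` slightly above `μ0` or smaller the denominator `exp x + z` is at least `c · exp x` with a
uniform `c > 0`. Hence `𝒩` and `∂𝒩/∂μ0` are both bounded by a multiple of `exp (−(F/T0) ε)`.
-/

open MeasureTheory Real Set

/-- The derivative `∂𝒩/∂μ0 = −∂𝒩/∂E` of the phase-space density. -/
noncomputable def phaseD (gs T0 μ0 z E : ℝ) : ℝ :=
  gs / (8 * π ^ 3) * (Real.exp ((E - μ0) / T0) / T0 / (Real.exp ((E - μ0) / T0) + z) ^ 2)

lemma hasDerivAt_phaseN_mu (gs T0 u z E : ℝ) (h : Real.exp ((E - u) / T0) + z ≠ 0) :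
    HasDerivAt (fun u => phaseN gs T0 u z E) (phaseD gs T0 u z E) u := by
  have h1 : HasDerivAt (fun u => (E - u) / T0) (-1 / T0) u :=
    ((hasDerivAt_id u).const_sub E).div_const T0
  have h2 := ((h1.exp.add_const z).fun_inv h).const_mul (gs / (8 * π ^ 3))
  refine h2.congr_deriv ?_
  unfold phaseD
  ring

lemma hasDerivAt_phaseN_energy (gs T0 u z F ε : ℝ)
    (h : Real.exp ((ε * F - u) / T0) + z ≠ 0) :
    HasDerivAt (fun ε => phaseN gs T0 u z (ε * F)) (-(F * phaseD gs T0 u z (ε * F))) ε := by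
  have h1 : HasDerivAt (fun ε => (ε * F - u) / T0) (1 * F / T0) ε :=
    (((hasDerivAt_id ε).mul_const F).sub_const u).div_const T0
  have h2 := ((h1.exp.add_const z).fun_inv h).const_mul (gs / (8 * π ^ 3))
  refine h2.congr_deriv ?_
  unfold phaseD
  ring

/-- Near `μ0` (and everywhere below) the denominator of `𝒩` is uniformly comparable
to `exp x`. -/
lemma exists_lower_bound (m T0 F z μ0 : ℝ) (hT0 : 0 < T0) (hF : 0 < F)
    (hz : z = -1 ∨ z = 1) (hpos : z = -1 → μ0 < m * F) :
    ∃ μ1 > μ0, ∃ c > 0, ∀ u ≤ μ1, ∀ ε ≥ m,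
      c * Real.exp ((ε * F - u) / T0) ≤ Real.exp ((ε * F - u) / T0) + z := by
  rcases hz with rfl | rfl
  · have h0 := hpos rfl
    -- With `x₁ = (mF − μ1)/T0 > 0`, the bound `exp x − 1 ≥ (1 − exp (−x₁)) exp x` holds for `x ≥ x₁`.
    refine ⟨(μ0 + m * F) / 2, by linarith,
      1 - Real.exp (-((m * F - (μ0 + m * F) / 2) / T0)), ?_, ?_⟩
    · have : 0 < (m * F - (μ0 + m * F) / 2) / T0 := div_pos (by linarith) hT0
      have := (Real.exp_lt_exp.mpr (neg_lt_zero.mpr this)).trans_eq Real.exp_zero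
      linarith
    · intro u hu ε hε
      have h1 : (m * F - (μ0 + m * F) / 2) / T0 ≤ (ε * F - u) / T0 := by
        gcongr
      have h2 : 1 ≤ Real.exp (-((m * F - (μ0 + m * F) / 2) / T0))
          * Real.exp ((ε * F - u) / T0) := by
        rw [← Real.exp_add]
        exact Real.one_le_exp (by linarith)
      linarith
  · exact ⟨μ0 + 1, by linarith, 1, one_pos, fun u _ ε _ => by linarith⟩

lemma phase_bounds (gs T0 F z c μ1 u ε : ℝ) (hgs : 0 < gs) (hT0 : 0 < T0) (hc : 0 < c)
    (hu : u ≤ μ1)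
    (h : c * Real.exp ((ε * F - u) / T0) ≤ Real.exp ((ε * F - u) / T0) + z) :
    |phaseN gs T0 u z (ε * F)|
        ≤ gs / (8 * π ^ 3) * c⁻¹ * Real.exp (μ1 / T0) * Real.exp (-(F / T0) * ε) ∧
    |phaseD gs T0 u z (ε * F)|
        ≤ gs / (8 * π ^ 3) * (c ^ 2)⁻¹ * T0⁻¹ * Real.exp (μ1 / T0)
          * Real.exp (-(F / T0) * ε) := by
  have hX : Real.exp (-((ε * F - u) / T0)) ≤ Real.exp (μ1 / T0) * Real.exp (-(F / T0) * ε) := by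
    rw [← Real.exp_add]
    apply Real.exp_le_exp.mpr
    have : u / T0 ≤ μ1 / T0 := by gcongr
    have e : -((ε * F - u) / T0) = u / T0 + -(F / T0) * ε := by ring
    linarith
  have hA : 0 < gs / (8 * π ^ 3) := by positivity
  set A := gs / (8 * π ^ 3)
  rw [Real.exp_neg] at hX
  have hx := Real.exp_pos ((ε * F - u) / T0)
  unfold phaseN phaseD
  set x := Real.exp ((ε * F - u) / T0)
  have hcx : 0 < c * x := by positivity
  have hD : 0 < x + z := hcx.trans_le h
  constructor
  · rw [abs_of_nonneg (by positivity)]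
    calc A * (x + z)⁻¹ ≤ A * (c * x)⁻¹ := by gcongr
      _ = A * c⁻¹ * x⁻¹ := by rw [mul_inv]; ring
      _ ≤ A * c⁻¹ * (Real.exp (μ1 / T0) * Real.exp (-(F / T0) * ε)) := by gcongr
      _ = _ := by ring
  · rw [abs_of_nonneg (by positivity)]
    calc A * (x / T0 / (x + z) ^ 2) ≤ A * (x / T0 / (c * x) ^ 2) := by gcongr
      _ = A * (c ^ 2)⁻¹ * T0⁻¹ * x⁻¹ := by field_simp
      _ ≤ A * (c ^ 2)⁻¹ * T0⁻¹ * (Real.exp (μ1 / T0) * Real.exp (-(F / T0) * ε)) := by gcongr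
      _ = _ := by ring

lemma integrableOn_pow_mul_exp (m b : ℝ) (hm : 0 ≤ m) (hb : 0 < b) (n : ℕ) :
    IntegrableOn (fun ε : ℝ => ε ^ n * Real.exp (-b * ε)) (Ioi m) := by
  have h := integrableOn_rpow_mul_exp_neg_mul_rpow (p := 1) (s := n) (b := b)
    (by linarith [n.cast_nonneg (α := ℝ)]) one_pos hb
  simp only [Real.rpow_natCast, Real.rpow_one] at h
  exact h.mono_set (Ioi_subset_Ioi hm)

lemma weight_bound (m ε s : ℝ) (hm : 0 ≤ m) (hε : m < ε) (hs : 0 ≤ s) (n : ℕ)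
    (hn : 2 * s = n) : |(ε ^ 2 - m ^ 2) ^ s| ≤ ε ^ n := by
  have h0 : 0 ≤ ε ^ 2 - m ^ 2 := by nlinarith
  rw [abs_of_nonneg (Real.rpow_nonneg h0 _)]
  calc (ε ^ 2 - m ^ 2) ^ s ≤ (ε ^ 2) ^ s :=
        Real.rpow_le_rpow h0 (by nlinarith) hs
    _ = ε ^ n := by
        rw [← Real.rpow_natCast ε 2, ← Real.rpow_mul (by linarith), ← Real.rpow_natCast, ← hn]
        norm_num

/-- The pressure, as a function of the chemical-potential parameter `μ0` on the open set
where the positivity condition holds, is differentiable with `∂P/∂μ0 = n/F`. -/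
theorem stmt9 (m gs T0 F z : ℝ) (hm : 0 ≤ m) (hgs : 0 < gs) (hT0 : 0 < T0) (hF : 0 < F)
    (hz : z = -1 ∨ z = 1) :
    ∀ μ0 : ℝ, (z = -1 → μ0 < m * F) →
      HasDerivAt (fun u => Pdef gs m T0 u z F) (nDef gs m T0 μ0 z F / F) μ0 := by
  intro μ0 hpos
  obtain ⟨μ1, hμ1, c, hc, hlow⟩ := exists_lower_bound m T0 F z μ0 hT0 hF hz hpos
  have hb : 0 < F / T0 := div_pos hF hT0
  have hD : ∀ u ≤ μ1, ∀ ε ≥ m, Real.exp ((ε * F - u) / T0) + z ≠ 0 := fun u hu ε hε =>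
    ((mul_pos hc (Real.exp_pos _)).trans_le (hlow u hu ε hε)).ne'
  have hN := fun u hu ε hε =>
    (phase_bounds gs T0 F z c μ1 u ε hgs hT0 hc hu (hlow u hu ε hε)).1
  have hDb := fun u hu ε hε =>
    (phase_bounds gs T0 F z c μ1 u ε hgs hT0 hc hu (hlow u hu ε hε)).2
  set K := gs / (8 * π ^ 3) * c⁻¹ * Real.exp (μ1 / T0)
  set K' := gs / (8 * π ^ 3) * (c ^ 2)⁻¹ * T0⁻¹ * Real.exp (μ1 / T0)
  have hw3 : ∀ ε > m, |(ε ^ 2 - m ^ 2) ^ ((3 : ℝ) / 2)| ≤ ε ^ 3 := fun ε hε =>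
    weight_bound m ε _ hm hε (by norm_num) 3 (by norm_num)
  have hw1 : ∀ ε > m, |(ε ^ 2 - m ^ 2) ^ ((1 : ℝ) / 2)| ≤ ε ^ 1 := fun ε hε =>
    weight_bound m ε _ hm hε (by norm_num) 1 (by norm_num)
  have hmeasP : ∀ u, Measurable
      (fun ε => (ε ^ 2 - m ^ 2) ^ ((3 : ℝ) / 2) * phaseN gs T0 u z (ε * F)) := by
    intro u; unfold phaseN; fun_prop
  have hmeasD : Measurable
      (fun ε => (ε ^ 2 - m ^ 2) ^ ((3 : ℝ) / 2) * phaseD gs T0 μ0 z (ε * F)) := by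
    unfold phaseD; fun_prop
  have hmeasn : Measurable
      (fun ε => (ε ^ 2 - m ^ 2) ^ ((1 : ℝ) / 2) * ε * phaseN gs T0 μ0 z (ε * F)) := by
    unfold phaseN; fun_prop
  have hintP : IntegrableOn
      (fun ε => (ε ^ 2 - m ^ 2) ^ ((3 : ℝ) / 2) * phaseN gs T0 μ0 z (ε * F)) (Ioi m) := by
    refine ((integrableOn_pow_mul_exp m _ hm hb 3).const_mul K).mono'
      (hmeasP μ0).aestronglyMeasurable ?_
    refine (ae_restrict_mem measurableSet_Ioi).mono fun ε (hε : m < ε) => ?_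
    have h0 : 0 ≤ ε := hm.trans hε.le
    rw [Real.norm_eq_abs, abs_mul]
    calc _ ≤ ε ^ 3 * (K * Real.exp (-(F / T0) * ε)) := by
          gcongr
          exacts [hw3 ε hε, hN μ0 hμ1.le ε hε.le]
      _ = _ := by ring
  have hboundD : ∀ u ≤ μ1, ∀ ε > m,
      ‖(ε ^ 2 - m ^ 2) ^ ((3 : ℝ) / 2) * phaseD gs T0 u z (ε * F)‖
        ≤ K' * (ε ^ 3 * Real.exp (-(F / T0) * ε)) := by
    intro u hu ε hε
    have h0 : 0 ≤ ε := hm.trans hε.le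
    rw [Real.norm_eq_abs, abs_mul]
    calc _ ≤ ε ^ 3 * (K' * Real.exp (-(F / T0) * ε)) := by
          gcongr
          exacts [hw3 ε hε, hDb u hu ε hε.le]
      _ = _ := by ring
  have hintn : IntegrableOn
      (fun ε => (ε ^ 2 - m ^ 2) ^ ((1 : ℝ) / 2) * ε * phaseN gs T0 μ0 z (ε * F)) (Ioi m) := by
    refine ((integrableOn_pow_mul_exp m _ hm hb 2).const_mul K).mono'
      hmeasn.aestronglyMeasurable ?_
    refine (ae_restrict_mem measurableSet_Ioi).mono fun ε (hε : m < ε) => ?_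
    have h0 : 0 ≤ ε := hm.trans hε.le
    rw [Real.norm_eq_abs, abs_mul, abs_mul, abs_of_nonneg h0]
    calc _ ≤ ε ^ 1 * ε * (K * Real.exp (-(F / T0) * ε)) := by
          gcongr
          exacts [hw1 ε hε, hN μ0 hμ1.le ε hε.le]
      _ = _ := by ring
  obtain ⟨hintD, hder⟩ := hasDerivAt_integral_of_dominated_loc_of_deriv_le
    (μ := volume.restrict (Ioi m)) (x₀ := μ0) (s := Iio μ1)
    (F := fun u ε => (ε ^ 2 - m ^ 2) ^ ((3 : ℝ) / 2) * phaseN gs T0 u z (ε * F))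
    (F' := fun u ε => (ε ^ 2 - m ^ 2) ^ ((3 : ℝ) / 2) * phaseD gs T0 u z (ε * F))
    (bound := fun ε => K' * (ε ^ 3 * Real.exp (-(F / T0) * ε)))
    (Iio_mem_nhds hμ1)
    (Filter.Eventually.of_forall fun u => (hmeasP u).aestronglyMeasurable)
    hintP hmeasD.aestronglyMeasurable
    ((ae_restrict_mem measurableSet_Ioi).mono fun ε hε u hu => hboundD u (le_of_lt hu) ε hε)
    ((integrableOn_pow_mul_exp m _ hm hb 3).const_mul K')
    ((ae_restrict_mem measurableSet_Ioi).mono fun ε hε u hu =>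
      (hasDerivAt_phaseN_mu gs T0 u z (ε * F) (hD u (le_of_lt hu) ε (le_of_lt hε))).const_mul _)
  -- The derivative of `w(ε) 𝒩(εF)`, whose integral over `(m, ∞)` is zero.
  have hW : ∀ ε ∈ Ioi m, HasDerivAt
      (fun ε => (ε ^ 2 - m ^ 2) ^ ((3 : ℝ) / 2) * phaseN gs T0 μ0 z (ε * F))
      (3 * ((ε ^ 2 - m ^ 2) ^ ((1 : ℝ) / 2) * ε * phaseN gs T0 μ0 z (ε * F))
        - F * ((ε ^ 2 - m ^ 2) ^ ((3 : ℝ) / 2) * phaseD gs T0 μ0 z (ε * F))) ε := by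
    intro ε hε
    have h1 : HasDerivAt (fun ε : ℝ => ε ^ 2 - m ^ 2) (2 * ε) ε := by
      simpa using (hasDerivAt_pow 2 ε).sub_const (m ^ 2)
    have h2 := (h1.rpow_const (p := 3 / 2) (Or.inr (by norm_num))).fun_mul
      (hasDerivAt_phaseN_energy gs T0 μ0 z F ε (hD μ0 hμ1.le ε (le_of_lt hε)))
    refine h2.congr_deriv ?_
    rw [show (3 : ℝ) / 2 - 1 = 1 / 2 by norm_num]
    ring
  have hintW := (hintn.const_mul 3).sub (hintD.const_mul F)
  have hcont : ContinuousWithinAt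
      (fun ε => (ε ^ 2 - m ^ 2) ^ ((3 : ℝ) / 2) * phaseN gs T0 μ0 z (ε * F)) (Ici m) m := by
    refine ContinuousAt.continuousWithinAt (ContinuousAt.mul ?_ ?_)
    · exact ContinuousAt.rpow_const (by fun_prop) (Or.inr (by norm_num))
    · exact (hasDerivAt_phaseN_energy gs T0 μ0 z F m (hD μ0 hμ1.le m le_rfl)).continuousAt
  have hlim := tendsto_zero_of_hasDerivAt_of_integrableOn_Ioi hW hintW hintP
  have hibp := integral_Ioi_of_hasDerivAt_of_tendsto hcont hW hintW hlim
  rw [integral_sub (hintn.const_mul 3) (hintD.const_mul F), integral_const_mul,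
    integral_const_mul, sub_self, Real.zero_rpow (by norm_num), zero_mul, sub_zero] at hibp
  have hfin := hder.const_mul (4 * π / 3)
  refine hfin.congr_deriv ?_
  unfold nDef
  rw [eq_div_iff hF.ne']
  linear_combination (-(4 * π / 3)) * hibp
end
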